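/- arXiv:2308.02852 — 4 statements merged into one kernel-verified Lean document; each statement's English description precedes it below -/
import Mathlib

section
/- Consider a steady state of the DC microgrid, i.e. node voltages v ∈ ℝ^n, filter currents i_f ∈ ℝ^d, line currents i_π ∈ ℝ^e, load currents i_L ∈ ℝ^n and power references p_2,…,p_d ∈ ℝ satisfying (i) 0 = I_f i_f − i_L − M i_π, (ii) R i_π = Mᵀ v, (iii) p_i = (I_fᵀ v)_i (i_f)_i for i = 2,…,d, and (iv) (I_fᵀ v)_1 = v_ref with v_ref > 0. Then the grid-forming filter current vanishes, (i_f)_1 = 0, if and only if ∑_{i=2}^d p_i = P_L, where P_L = vᵀ i_L + i_πᵀ R i_π is the total load (loads plus line losses). -/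
open Matrix

/-!
Pair Kirchhoff's current law with the node voltages. Transposing the incidence matrix turns the
line term `vᵀ M iπ` into the ohmic losses `iπᵀ R iπ`, so the filters together inject exactly the
total load. The grid-following filters therefore cover the load iff the grid-forming one injects
no power, and at nonzero voltage this means that its current vanishes.
-/

theorem sum_erase_eq_sum_iff {ι A : Type*} [DecidableEq ι] [AddCommMonoid A] [IsCancelAdd A]
    {s : Finset ι} {a : ι} (ha : a ∈ s) (f : ι → A) :
    ∑ i ∈ s.erase a, f i = ∑ i ∈ s, f i ↔ f a = 0 := by
  rw [← Finset.add_sum_erase s f ha, right_eq_add]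

section PowerBalance

variable {N D E K : Type*} [Fintype N] [Fintype D] [Fintype E]

/-- The total load `P_L` of a microgrid with line resistance matrix `R`, node voltages `v`, load
currents `iL` and line currents `iπ`: the power drawn by the loads plus the line losses. -/
def totalLoad [CommSemiring K] (R : Matrix E E K) (v iL : N → K) (iπ : E → K) : K :=
  v ⬝ᵥ iL + iπ ⬝ᵥ R *ᵥ iπ

theorem filterPower_eq_totalLoad [CommSemiring K] {M : Matrix N E K} {B : Matrix N D K}
    {R : Matrix E E K} {v iL : N → K} {i_f : D → K} {iπ : E → K}
    (kirchhoff : B *ᵥ i_f = iL + M *ᵥ iπ) (ohm : R *ᵥ iπ = Mᵀ *ᵥ v) :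
    (Bᵀ *ᵥ v) ⬝ᵥ i_f = totalLoad R v iL iπ :=
  calc (Bᵀ *ᵥ v) ⬝ᵥ i_f
    _ = v ⬝ᵥ B *ᵥ i_f := by rw [dotProduct_comm, dotProduct_transpose_mulVec]
    _ = v ⬝ᵥ iL + v ⬝ᵥ M *ᵥ iπ := by rw [kirchhoff, dotProduct_add]
    _ = v ⬝ᵥ iL + iπ ⬝ᵥ Mᵀ *ᵥ v := by rw [dotProduct_transpose_mulVec]
    _ = totalLoad R v iL iπ := by rw [← ohm, totalLoad]

theorem gridForming_current_zero_iff_power_balance_general [DecidableEq D] [CommRing K]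
    [NoZeroDivisors K] {M : Matrix N E K} {B : Matrix N D K} {R : Matrix E E K}
    {v iL : N → K} {i_f p : D → K} {iπ : E → K} {g : D}
    (kirchhoff : 0 = B *ᵥ i_f - iL - M *ᵥ iπ) (ohm : R *ᵥ iπ = Mᵀ *ᵥ v)
    (power : ∀ i, i ≠ g → p i = (Bᵀ *ᵥ v) i * i_f i) (voltage : (Bᵀ *ᵥ v) g ≠ 0) :
    i_f g = 0 ↔ ∑ i ∈ Finset.univ.erase g, p i = totalLoad R v iL iπ := by
  have current_balance : B *ᵥ i_f = iL + M *ᵥ iπ := by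
    rwa [sub_sub, eq_comm, sub_eq_zero] at kirchhoff
  have following_power : ∑ i ∈ Finset.univ.erase g, p i =
      ∑ i ∈ Finset.univ.erase g, (Bᵀ *ᵥ v) i * i_f i :=
    Finset.sum_congr rfl fun i hi ↦ power i (Finset.ne_of_mem_erase hi)
  rw [following_power, ← filterPower_eq_totalLoad current_balance ohm, dotProduct,
    sum_erase_eq_sum_iff (Finset.mem_univ g), mul_eq_zero_iff_left voltage]

end PowerBalance

/-- **Grid-forming current vanishes iff the grid-following references meet the load.**
A DC microgrid has `n` nodes, `d ≥ 1` DGUs (DGU `0` is the grid-forming one) and `e`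
power lines with incidence matrix `M`.  `If` is a selection matrix assigning each DGU
to its node and `R` is the diagonal matrix of the strictly positive line resistances.
At a steady state satisfying
(i)  `0 = If i_f − iL − M iπ`,
(ii) `R iπ = Mᵀ v`,
(iii) `p i = (Ifᵀ v)_i (i_f)_i` for every grid-following DGU `i ≠ 0`, and
(iv) `(Ifᵀ v)_0 = v_ref > 0`,
the grid-forming filter current vanishes, `(i_f)_0 = 0`, if and only if the power
references of the grid-following DGUs sum to the total load
`P_L = vᵀ iL + iπᵀ R iπ` (loads plus line losses). -/
theorem gridForming_current_zero_iff_power_balance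
    (n d e : ℕ) (hd : 0 < d)
    (M : Matrix (Fin n) (Fin e) ℝ)
    (If : Matrix (Fin n) (Fin d) ℝ)
    (σ : Fin d → Fin n) (hσ : Function.Injective σ)
    (hIf : If = Matrix.of fun i j => if i = σ j then (1 : ℝ) else 0)
    (r : Fin e → ℝ) (hr : ∀ j, 0 < r j)
    (R : Matrix (Fin e) (Fin e) ℝ) (hR : R = Matrix.diagonal r)
    (v : Fin n → ℝ) (i_f : Fin d → ℝ) (iπ : Fin e → ℝ) (iL : Fin n → ℝ)
    (p : Fin d → ℝ) (vref : ℝ)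
    (h1 : (0 : Fin n → ℝ) = If.mulVec i_f - iL - M.mulVec iπ)
    (h2 : R.mulVec iπ = Mᵀ.mulVec v)
    (h3 : ∀ i : Fin d, i ≠ ⟨0, hd⟩ → p i = (Ifᵀ.mulVec v) i * i_f i)
    (h4 : (Ifᵀ.mulVec v) ⟨0, hd⟩ = vref) (hvref : 0 < vref)
    (PL : ℝ) (hPL : PL = v ⬝ᵥ iL + iπ ⬝ᵥ R.mulVec iπ) :
    i_f ⟨0, hd⟩ = 0 ↔ ∑ i ∈ Finset.univ.erase ⟨0, hd⟩, p i = PL := by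
  subst hPL
  exact gridForming_current_zero_iff_power_balance_general h1 h2 h3 (h4 ▸ hvref.ne')
end

section
/- Let S ∈ ℝ^{N×N} be symmetric positive definite, A : ℝ^N → ℝ^{N×N} a state-dependent matrix-valued map, B ∈ ℝ^{N×m}, C ∈ ℝ^{m×N}, and X ⊆ ℝ^N. Assume that for every y ∈ X the symmetric block matrix [[A(y)ᵀS + SA(y), SB − Cᵀ],[BᵀS − C, 0]] is negative semidefinite. Then along any differentiable trajectory x : ℝ → ℝ^N satisfying x′(t) = A(x(t)) x(t) + B u(t) for an input u : ℝ → ℝ^m, the storage function V(t) = x(t)ᵀ S x(t) satisfies V′(t) ≤ 2 u(t)ᵀ C x(t) at every t with x(t) ∈ X; i.e., the system is passive with respect to the port (u, Cx). -/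
open Matrix

/-- A real matrix `M` is negative semidefinite if it is symmetric and its quadratic
form is nonpositive. -/
def Matrix.NegSemidefR {ι : Type*} [Fintype ι] (M : Matrix ι ι ℝ) : Prop :=
  Mᵀ = M ∧ ∀ z : ι → ℝ, z ⬝ᵥ M.mulVec z ≤ 0

/-! Write `M` for the block matrix of the LMI and `z = (x, u)`. Differentiating `V = xᵀSx` along
`ẋ = Ax + Bu` gives exactly the terms of `zᵀMz` that involve `S`, and the remaining ones add up to
`-2uᵀCx`. Hence `V′ = zᵀMz + 2uᵀCx`, and the LMI says that the first term is nonpositive. -/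

section Derivatives

variable {𝕜 𝔸 m n : Type*} [NontriviallyNormedField 𝕜] [NormedRing 𝔸] [NormedAlgebra 𝕜 𝔸]
  [Fintype n] {t : 𝕜}

lemma hasDerivAt_dotProduct {v w : 𝕜 → n → 𝔸} {v' w' : n → 𝔸}
    (hv : HasDerivAt v v' t) (hw : HasDerivAt w w' t) :
    HasDerivAt (fun s => v s ⬝ᵥ w s) (v' ⬝ᵥ w t + v t ⬝ᵥ w') t := by
  simp only [dotProduct, ← Finset.sum_add_distrib]
  exact HasDerivAt.fun_sum fun i _ => (hasDerivAt_pi.1 hv i).mul (hasDerivAt_pi.1 hw i)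

lemma hasDerivAt_const_mulVec (M : Matrix m n 𝔸) {v : 𝕜 → n → 𝔸} {v' : n → 𝔸}
    (hv : HasDerivAt v v' t) : HasDerivAt (fun s => M *ᵥ v s) (M *ᵥ v') t :=
  hasDerivAt_pi.2 fun i =>
    HasDerivAt.fun_sum fun j _ => (hasDerivAt_pi.1 hv j).const_mul (M i j)

end Derivatives

section PassivityLMI

variable {m n : Type*} [Fintype n]

/-- The block matrix of the passivity linear matrix inequality for `ẋ = Ax + Bu` with output `Cx`
and storage function `xᵀSx`, acting on the stacked vector `(x, u)`. -/
def passivityMatrix {R : Type*} [Ring R] (S A : Matrix n n R) (B : Matrix n m R)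
    (C : Matrix m n R) : Matrix (n ⊕ m) (n ⊕ m) R :=
  fromBlocks (Aᵀ * S + S * A) (S * B - Cᵀ) (Bᵀ * S - C) 0

variable [Fintype m]

lemma dotProduct_passivityMatrix_mulVec {R : Type*} [CommRing R] (S A : Matrix n n R)
    (B : Matrix n m R) (C : Matrix m n R) (x : n → R) (u : m → R) :
    Sum.elim x u ⬝ᵥ passivityMatrix S A B C *ᵥ Sum.elim x u =
      (A *ᵥ x + B *ᵥ u) ⬝ᵥ S *ᵥ x + x ⬝ᵥ S *ᵥ (A *ᵥ x + B *ᵥ u) - 2 * (u ⬝ᵥ C *ᵥ x) := by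
  rw [dotProduct_comm (A *ᵥ x + B *ᵥ u)]
  simp only [passivityMatrix, fromBlocks_mulVec, sumElim_dotProduct_sumElim, Sum.elim_comp_inl,
    Sum.elim_comp_inr, add_mulVec, sub_mulVec, zero_mulVec, ← mulVec_mulVec, mulVec_add,
    dotProduct_add, dotProduct_sub, dotProduct_zero, dotProduct_transpose_mulVec]
  ring

lemma hasDerivAt_storage {𝕜 : Type*} [NontriviallyNormedField 𝕜] (S A : Matrix n n 𝕜)
    (B : Matrix n m 𝕜) (C : Matrix m n 𝕜) {x : 𝕜 → n → 𝕜} {u : m → 𝕜} {t : 𝕜}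
    (hx : HasDerivAt x (A *ᵥ x t + B *ᵥ u) t) :
    HasDerivAt (fun s => x s ⬝ᵥ S *ᵥ x s)
      (Sum.elim (x t) u ⬝ᵥ passivityMatrix S A B C *ᵥ Sum.elim (x t) u +
        2 * (u ⬝ᵥ C *ᵥ x t)) t := by
  rw [dotProduct_passivityMatrix_mulVec, sub_add_cancel]
  exact hasDerivAt_dotProduct hx (hasDerivAt_const_mulVec S hx)

theorem electric_port_passivity_general (S : Matrix n n ℝ) (A : (n → ℝ) → Matrix n n ℝ)
    (B : (n → ℝ) → Matrix n m ℝ) (C : (n → ℝ) → Matrix m n ℝ) (X : Set (n → ℝ))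
    (hLMI : ∀ y ∈ X, ∀ z, z ⬝ᵥ passivityMatrix S (A y) (B y) (C y) *ᵥ z ≤ 0)
    (x : ℝ → n → ℝ) (u : ℝ → m → ℝ)
    (hx : ∀ t, x t ∈ X → HasDerivAt x (A (x t) *ᵥ x t + B (x t) *ᵥ u t) t) :
    ∀ t, x t ∈ X → deriv (fun s => x s ⬝ᵥ S *ᵥ x s) t ≤ 2 * (u t ⬝ᵥ C (x t) *ᵥ x t) := by
  intro t ht
  rw [(hasDerivAt_storage S (A (x t)) (B (x t)) (C (x t)) (hx t ht)).deriv]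
  exact add_le_of_nonpos_left (hLMI (x t) ht _)

end PassivityLMI

/-- **LMI certificate of passivity of the electric port.**
Let `S` be symmetric positive definite, `A` a state-dependent matrix map,
`B ∈ ℝ^{N×m}`, `C ∈ ℝ^{m×N}` and `X ⊆ ℝ^N`.  If for every `y ∈ X` the block matrix
`[[A(y)ᵀS + SA(y), SB − Cᵀ], [BᵀS − C, 0]]` is negative semidefinite, then along any
differentiable trajectory of `ẋ = A(x)x + Bu`, the storage function
`V(t) = x(t)ᵀ S x(t)` satisfies `V′(t) ≤ 2 u(t)ᵀ C x(t)` whenever `x(t) ∈ X`;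
i.e. the system is passive w.r.t. the port `(u, Cx)`. -/
theorem electric_port_passivity
    (N m : ℕ)
    (S : Matrix (Fin N) (Fin N) ℝ) (hS : S.PosDef)
    (A : (Fin N → ℝ) → Matrix (Fin N) (Fin N) ℝ)
    (B : Matrix (Fin N) (Fin m) ℝ) (C : Matrix (Fin m) (Fin N) ℝ)
    (X : Set (Fin N → ℝ))
    (hLMI : ∀ y ∈ X,
      (Matrix.fromBlocks ((A y)ᵀ * S + S * A y) (S * B - Cᵀ) (Bᵀ * S - C)
        (0 : Matrix (Fin m) (Fin m) ℝ)).NegSemidefR)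
    (x : ℝ → Fin N → ℝ) (u : ℝ → Fin m → ℝ)
    (hx : ∀ t : ℝ, HasDerivAt x ((A (x t)).mulVec (x t) + B.mulVec (u t)) t) :
    ∀ t : ℝ, x t ∈ X →
      deriv (fun s => x s ⬝ᵥ S.mulVec (x s)) t ≤ 2 * (u t ⬝ᵥ C.mulVec (x t)) := by
  exact electric_port_passivity_general S A (fun _ => B) (fun _ => C) X
    (fun y hy => (hLMI y hy).2) x u (fun t _ => hx t)
end

section
/- Let N ≥ 1, let τ_1,…,τ_N > 0, q_1,…,q_N > 0 and κ > 0, and set T = diag(τ_i), Q = diag(q_i). Consider the (N+1)×(N+1) real block matrix M = [[−2 T Q, T 1_N],[−κ 1_Nᵀ, 0]], which is the system matrix of the primal-dual price controller ṗ_i = −τ_i(2 q_i p_i + r_i − λ), λ̇ = κ(P_L − ∑_i p_i) in coordinates shifted by its equilibrium. Then every eigenvalue of M over ℂ has strictly negative real part, i.e. M is Hurwitz. -/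
open Matrix

/-!
In the metric `P = diag(T⁻¹, K⁻¹)` the off-diagonal part of a primal-dual matrix is skew-Hermitian,
so only the primal block dissipates energy: `P * M + Mᴴ * P = diag(-(H + Hᴴ), 0)`. An eigenvector
`(x, y)` without dissipation has `x = 0`, hence `Aᴴ *ᵥ y = 0` and then `y = 0`, because the
constraints, i.e. the rows of `A`, are independent. This is LaSalle's argument for linear systems.
-/

open scoped ComplexOrder

theorem star_dotProduct_fromBlocks_zero_mulVec {R m n : Type*} [NonUnitalNonAssocSemiring R]
    [Star R] [Fintype m] [Fintype n] (A : Matrix m m R) (D : Matrix n n R) (v : m ⊕ n → R) :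
    star v ⬝ᵥ fromBlocks A 0 0 D *ᵥ v =
      star (v ∘ Sum.inl) ⬝ᵥ A *ᵥ (v ∘ Sum.inl) + star (v ∘ Sum.inr) ⬝ᵥ D *ᵥ (v ∘ Sum.inr) := by
  simp [fromBlocks_mulVec, dotProduct]

section BlockDiagonal

variable {R m n : Type*} [Ring R] [PartialOrder R] [StarRing R] [AddLeftMono R]
  [Finite m] [Finite n]

theorem posSemidef_fromBlocks_zero {A : Matrix m m R} {D : Matrix n n R}
    (hA : A.PosSemidef) (hD : D.PosSemidef) : (fromBlocks A 0 0 D).PosSemidef := by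
  have := Fintype.ofFinite m
  have := Fintype.ofFinite n
  refine .of_dotProduct_mulVec_nonneg
    (hA.isHermitian.fromBlocks conjTranspose_zero hD.isHermitian) fun v ↦ ?_
  rw [star_dotProduct_fromBlocks_zero_mulVec]
  exact add_nonneg (hA.dotProduct_mulVec_nonneg _) (hD.dotProduct_mulVec_nonneg _)

theorem posDef_fromBlocks_zero {A : Matrix m m R} {D : Matrix n n R}
    (hA : A.PosDef) (hD : D.PosDef) : (fromBlocks A 0 0 D).PosDef := by
  have := Fintype.ofFinite m
  have := Fintype.ofFinite n
  refine .of_dotProduct_mulVec_pos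
    (hA.isHermitian.fromBlocks conjTranspose_zero hD.isHermitian) fun v hv ↦ ?_
  rw [star_dotProduct_fromBlocks_zero_mulVec]
  by_cases hl : v ∘ Sum.inl = 0
  · have hr : v ∘ Sum.inr ≠ 0 := fun hr ↦ hv <| by
      rw [← Sum.elim_comp_inl_inr v, hl, hr, Sum.elim_zero_zero]
    exact add_pos_of_nonneg_of_pos (hA.posSemidef.dotProduct_mulVec_nonneg _)
      (hD.dotProduct_mulVec_pos hr)
  · exact add_pos_of_pos_of_nonneg (hA.dotProduct_mulVec_pos hl)
      (hD.posSemidef.dotProduct_mulVec_nonneg _)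

end BlockDiagonal

theorem exists_ne_zero_mulVec_eq_smul_of_mem_spectrum {K n : Type*} [Field K] [Fintype n]
    [DecidableEq n] {M : Matrix n n K} {μ : K} (hμ : μ ∈ spectrum K M) :
    ∃ v ≠ 0, M *ᵥ v = μ • v := by
  rw [← spectrum_toLin', ← Module.End.hasEigenvalue_iff_mem_spectrum] at hμ
  obtain ⟨v, hv⟩ := hμ.exists_hasEigenvector
  exact ⟨v, hv.2, by rw [← toLin'_apply, hv.apply_eq_smul]⟩

theorem star_dotProduct_lyapunov_mulVec {R n : Type*} [CommRing R] [StarRing R] [Fintype n]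
    {P M : Matrix n n R} {μ : R} {v : n → R} (hv : M *ᵥ v = μ • v) :
    star v ⬝ᵥ (P * M + Mᴴ * P) *ᵥ v = (μ + star μ) * (star v ⬝ᵥ P *ᵥ v) := by
  have hP : star v ⬝ᵥ (P * M) *ᵥ v = μ * (star v ⬝ᵥ P *ᵥ v) := by
    rw [← mulVec_mulVec, hv, mulVec_smul, dotProduct_smul, smul_eq_mul]
  have hPstar : star v ⬝ᵥ (Mᴴ * P) *ᵥ v = star μ * (star v ⬝ᵥ P *ᵥ v) := by
    rw [← mulVec_mulVec, dotProduct_mulVec, ← star_mulVec, hv, star_smul, smul_dotProduct,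
      smul_eq_mul]
  rw [add_mulVec, dotProduct_add, hP, hPstar, add_mul]

section PrimalDual

variable {R m n : Type*} [CommRing R] [StarRing R] [Fintype m] [Fintype n]

/-- The system matrix of the preconditioned primal-dual gradient dynamics
`ẋ = -T (H x + r - Aᴴ y)`, `ẏ = K (b - A x)` for the quadratic program with Hessian `H` and
constraint `A x = b`, in coordinates shifted by an equilibrium. -/
def primalDualMatrix (T H : Matrix m m R) (K : Matrix n n R) (A : Matrix n m R) :
    Matrix (m ⊕ n) (m ⊕ n) R :=
  fromBlocks (-(T * H)) (T * Aᴴ) (-(K * A)) 0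

namespace primalDualMatrix

variable [DecidableEq m] {T H : Matrix m m R} {K : Matrix n n R} {A : Matrix n m R}

theorem lyapunov_eq [DecidableEq n] (hT : T.IsHermitian) (hTunit : IsUnit T)
    (hK : K.IsHermitian) (hKunit : IsUnit K) :
    fromBlocks T⁻¹ 0 0 K⁻¹ * primalDualMatrix T H K A +
      (primalDualMatrix T H K A)ᴴ * fromBlocks T⁻¹ 0 0 K⁻¹ = fromBlocks (-(H + Hᴴ)) 0 0 0 := by
  have hPM : fromBlocks T⁻¹ 0 0 K⁻¹ * primalDualMatrix T H K A = fromBlocks (-H) Aᴴ (-A) 0 := by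
    simp [primalDualMatrix, fromBlocks_multiply,
      T.nonsing_inv_mul_cancel_left _ (T.isUnit_iff_isUnit_det.1 hTunit),
      K.nonsing_inv_mul_cancel_left _ (K.isUnit_iff_isUnit_det.1 hKunit)]
  have hP : (fromBlocks T⁻¹ 0 0 K⁻¹).IsHermitian := hT.inv.fromBlocks conjTranspose_zero hK.inv
  calc
    _ = fromBlocks (-H) Aᴴ (-A) 0 + (fromBlocks (-H) Aᴴ (-A) 0)ᴴ := by
      rw [← hPM, conjTranspose_mul, hP.eq]
    _ = _ := by simp [fromBlocks_conjTranspose, fromBlocks_add, add_comm]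

theorem eq_zero_of_mulVec_eq_smul (hT : IsUnit T) (hA : LinearIndependent R A.row) {μ : R}
    {v : m ⊕ n → R} (hv : primalDualMatrix T H K A *ᵥ v = μ • v) (hprimal : v ∘ Sum.inl = 0) :
    v = 0 := by
  have hTA : T *ᵥ Aᴴ *ᵥ (v ∘ Sum.inr) = 0 := by
    simpa [primalDualMatrix, fromBlocks_mulVec, hprimal, Pi.smul_comp]
      using congrArg (· ∘ Sum.inl) hv
  have hdual : Aᴴ *ᵥ (v ∘ Sum.inr) = 0 :=
    mulVec_injective_of_isUnit hT (hTA.trans (mulVec_zero T).symm)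
  have hr : star (v ∘ Sum.inr) = 0 := vecMul_injective_iff.2 hA <| by
    simpa [star_mulVec] using congrArg star hdual
  rw [← Sum.elim_comp_inl_inr v, hprimal, star_eq_zero.1 hr, Sum.elim_zero_zero]

end primalDualMatrix

end PrimalDual

section RCLike

variable {𝕜 m n : Type*} [RCLike 𝕜] [Fintype m] [Fintype n]

theorem re_neg_of_mem_spectrum_of_lyapunov [DecidableEq n] {P M : Matrix n n 𝕜} (hP : P.PosDef)
    (hdiss : (-(P * M + Mᴴ * P)).PosSemidef)
    (hker : ∀ (μ : 𝕜) (v : n → 𝕜), M *ᵥ v = μ • v → (P * M + Mᴴ * P) *ᵥ v = 0 → v = 0)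
    {μ : 𝕜} (hμ : μ ∈ spectrum 𝕜 M) : RCLike.re μ < 0 := by
  obtain ⟨v, hv0, hv⟩ := exists_ne_zero_mulVec_eq_smul_of_mem_spectrum hμ
  have henergy : 0 < star v ⬝ᵥ P *ᵥ v := hP.dotProduct_mulVec_pos hv0
  have hdecay : star v ⬝ᵥ (P * M + Mᴴ * P) *ᵥ v < 0 := by
    have hle := hdiss.dotProduct_mulVec_nonneg v
    have hne : star v ⬝ᵥ (-(P * M + Mᴴ * P)) *ᵥ v ≠ 0 := fun h ↦ hv0 <| hker μ v hv <| by
      simpa only [neg_mulVec, neg_eq_zero] using (hdiss.dotProduct_mulVec_zero_iff v).1 h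
    simpa only [neg_mulVec, dotProduct_neg, Left.neg_pos_iff] using lt_of_le_of_ne hle hne.symm
  have hre : (2 * RCLike.re μ) * RCLike.re (star v ⬝ᵥ P *ᵥ v) < 0 := by
    rw [star_dotProduct_lyapunov_mulVec hv, RCLike.star_def, RCLike.add_conj] at hdecay
    rw [← RCLike.re_ofReal_mul]
    simpa using (RCLike.neg_iff.1 hdecay).1
  linarith [neg_of_mul_neg_left hre (RCLike.pos_iff.1 henergy).1.le]

theorem primal_dual_price_controller_hurwitz_general [DecidableEq m] [DecidableEq n]
    {T H : Matrix m m 𝕜} {K : Matrix n n 𝕜} {A : Matrix n m 𝕜}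
    (hT : T.PosDef) (hH : (H + Hᴴ).PosDef) (hK : K.PosDef) (hA : LinearIndependent 𝕜 A.row) :
    ∀ μ ∈ spectrum 𝕜 (primalDualMatrix T H K A), RCLike.re μ < 0 := by
  intro μ hμ
  refine re_neg_of_mem_spectrum_of_lyapunov (posDef_fromBlocks_zero hT.inv hK.inv) ?_ ?_ hμ <;>
    rw [primalDualMatrix.lyapunov_eq hT.isHermitian hT.isUnit hK.isHermitian hK.isUnit]
  · simpa [fromBlocks_neg] using posSemidef_fromBlocks_zero hH.posSemidef (.zero (n := n))
  · intro ν v hv hzero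
    refine primalDualMatrix.eq_zero_of_mulVec_eq_smul hT.isUnit hA hv ?_
    have hinl : (H + Hᴴ) *ᵥ (v ∘ Sum.inl) = 0 := by
      simpa [fromBlocks_mulVec, neg_mulVec, -neg_add_rev] using congrArg (· ∘ Sum.inl) hzero
    exact mulVec_injective_iff_isUnit.2 hH.isUnit (hinl.trans (mulVec_zero _).symm)

end RCLike

theorem posDef_diagonal_ofReal {n : Type*} [DecidableEq n] {d : n → ℝ} (hd : ∀ i, 0 < d i) :
    (diagonal fun i ↦ (d i : ℂ)).PosDef :=
  .diagonal fun i ↦ Complex.zero_lt_real.2 (hd i)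

theorem linearIndependent_row_const_one {R m n : Type*} [Ring R] [IsDomain R] [Unique n]
    [Nonempty m] :
    LinearIndependent R (of fun (_ : n) (_ : m) ↦ (1 : R)).row :=
  linearIndependent_unique_iff.2 fun h ↦ one_ne_zero (congrFun h (Classical.arbitrary m))

theorem map_ofReal_fromBlocks_eq_primalDualMatrix {m n : Type*} [Fintype m] [DecidableEq m]
    [Fintype n] [DecidableEq n] (τ q : m → ℝ) (κ : ℝ) :
    (fromBlocks (-(2 : ℝ) • (diagonal τ * diagonal q)) (of fun i (_ : n) ↦ τ i)
      (of fun (_ : n) _ ↦ -κ) 0).map (Complex.ofReal : ℝ → ℂ) =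
      primalDualMatrix (diagonal fun i ↦ (τ i : ℂ)) (diagonal fun i ↦ ((2 * q i : ℝ) : ℂ))
        (diagonal fun _ ↦ (κ : ℂ)) (of fun _ _ ↦ 1) := by
  ext (i | i) (j | j)
  · obtain rfl | hij := eq_or_ne i j
    · simp [primalDualMatrix, mul_left_comm]
    · simp [primalDualMatrix, hij]
  all_goals simp [primalDualMatrix]

/-- **The primal-dual price controller is Hurwitz.**
With gains `τ i > 0`, cost curvatures `q i > 0` and price gain `κ > 0`, set
`T = diag(τ)` and `Q = diag(q)`.  The system matrix
`M = [[−2 T Q, T 1_N], [−κ 1_Nᵀ, 0]]` of the primal-dual gradient dynamics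
`ṗ_i = −τ_i (2 q_i p_i + r_i − λ)`, `λ̇ = κ (P_L − ∑ p_i)` (in coordinates shifted
by the equilibrium) has all its eigenvalues (over `ℂ`) in the open left half plane. -/
theorem primal_dual_price_controller_hurwitz
    (N : ℕ) (hN : 1 ≤ N)
    (τ q : Fin N → ℝ) (hτ : ∀ i, 0 < τ i) (hq : ∀ i, 0 < q i)
    (κ : ℝ) (hκ : 0 < κ)
    (M : Matrix (Fin N ⊕ Fin 1) (Fin N ⊕ Fin 1) ℝ)
    (hM : M = Matrix.fromBlocks
      (-(2 : ℝ) • (Matrix.diagonal τ * Matrix.diagonal q))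
      (Matrix.of fun i (_ : Fin 1) => τ i)
      (Matrix.of fun (_ : Fin 1) _ => -κ)
      (0 : Matrix (Fin 1) (Fin 1) ℝ)) :
    ∀ μ ∈ spectrum ℂ (M.map (Complex.ofReal : ℝ → ℂ)), μ.re < 0 := by
  rw [hM, map_ofReal_fromBlocks_eq_primalDualMatrix]
  have : Nonempty (Fin N) := ⟨⟨0, hN⟩⟩
  have hH := posDef_diagonal_ofReal fun i ↦ mul_pos two_pos (hq i)
  exact primal_dual_price_controller_hurwitz_general (posDef_diagonal_ofReal hτ)
    (hH.add hH.conjTranspose) (posDef_diagonal_ofReal fun _ ↦ hκ) linearIndependent_row_const_one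
end

section
/- Consider a steady state of the DC microgrid, i.e. node voltages v ∈ ℝ^n, filter currents i_f ∈ ℝ^d, line currents i_π ∈ ℝ^e, load currents i_L ∈ ℝ^n and power references p_2,…,p_d ∈ ℝ satisfying (i) 0 = I_f i_f − i_L − M i_π, (ii) R i_π = Mᵀ v, (iii) p_i = (I_fᵀ v)_i (i_f)_i for i = 2,…,d, and (iv) (I_fᵀ v)_1 = v_ref with v_ref > 0. Suppose in addition that (i_f)_1 = 0 and that there exists λ̄ ∈ ℝ with 2 q_i p_i + r_i = λ̄ for every i = 2,…,d. Then (p_2,…,p_d) is a global minimizer of ∑_{i=2}^d f_i(p_i) over all (p_2,…,p_d) with ∑_{i=2}^d p_i = P_L, where P_L = vᵀ i_L + i_πᵀ R i_π; i.e., the closed-loop equilibrium achieves economically optimal dispatch. -/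
open Matrix Finset

/-! Tellegen's theorem: by Kirchhoff's current law, the power injected by the DGUs is exactly the
power drawn by the loads and dissipated in the lines, so the equilibrium is a feasible dispatch.
Equal marginal costs provide a common subgradient `λ̄`; summed over the DGUs, the subgradient
inequalities have total linear term `λ̄` times the change in total power, which vanishes between
feasible dispatches. -/

section PowerBalance

variable {N D E α : Type*} [Fintype N] [Fintype D] [Fintype E] [NonUnitalCommSemiring α]

theorem power_balance_of_kirchhoff {B : Matrix N D α} {M : Matrix N E α} {i_f : D → α}
    {iL : N → α} {iπ : E → α} (kirchhoff : B *ᵥ i_f = iL + M *ᵥ iπ) (v : N → α) :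
    (Bᵀ *ᵥ v) ⬝ᵥ i_f = v ⬝ᵥ iL + iπ ⬝ᵥ Mᵀ *ᵥ v :=
  calc
    (Bᵀ *ᵥ v) ⬝ᵥ i_f = v ⬝ᵥ B *ᵥ i_f := by rw [dotProduct_comm, dotProduct_transpose_mulVec]
    _ = v ⬝ᵥ iL + v ⬝ᵥ M *ᵥ iπ := by rw [kirchhoff, dotProduct_add]
    _ = v ⬝ᵥ iL + iπ ⬝ᵥ Mᵀ *ᵥ v := by rw [dotProduct_transpose_mulVec]

end PowerBalance

section EqualMarginalCost

variable {ι 𝕜 : Type*}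

/-- `m` is a subgradient of `f` at `x`: the affine function of slope `m` that agrees with `f` at
`x` lies below `f` everywhere. For a convex cost `f`, `m` plays the role of the marginal cost. -/
def IsSubgradientAt [Ring 𝕜] [LE 𝕜] (f : 𝕜 → 𝕜) (m x : 𝕜) : Prop :=
  ∀ y, f x + m * (y - x) ≤ f y

theorem isSubgradientAt_quadratic [CommRing 𝕜] [LinearOrder 𝕜] [IsOrderedRing 𝕜] {a : 𝕜}
    (ha : 0 ≤ a) (b c x : 𝕜) :
    IsSubgradientAt (fun y => a * y ^ 2 + b * y + c) (2 * a * x + b) x := fun y =>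
  calc
    a * x ^ 2 + b * x + c + (2 * a * x + b) * (y - x)
        ≤ a * x ^ 2 + b * x + c + (2 * a * x + b) * (y - x) + a * (y - x) ^ 2 :=
      le_add_of_nonneg_right (mul_nonneg ha (sq_nonneg _))
    _ = a * y ^ 2 + b * y + c := by ring

theorem isMinOn_sum_of_isSubgradientAt [Ring 𝕜] [PartialOrder 𝕜] [IsOrderedAddMonoid 𝕜]
    {s : Finset ι} {f : ι → 𝕜 → 𝕜} {m : 𝕜} {x : ι → 𝕜}
    (hf : ∀ i ∈ s, IsSubgradientAt (f i) m (x i)) :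
    IsMinOn (fun y => ∑ i ∈ s, f i (y i)) {y | ∑ i ∈ s, y i = ∑ i ∈ s, x i} x := fun y hy =>
  calc
    ∑ i ∈ s, f i (x i) = ∑ i ∈ s, (f i (x i) + m * (y i - x i)) := by
      rw [sum_add_distrib, ← mul_sum, sum_sub_distrib, hy, sub_self, mul_zero, add_zero]
    _ ≤ ∑ i ∈ s, f i (y i) := sum_le_sum fun i hi => hf i hi (y i)

end EqualMarginalCost

theorem equilibrium_optimal_dispatch_general {N D E 𝕜 : Type*} [Fintype N] [Fintype D]
    [Fintype E] [CommRing 𝕜] [PartialOrder 𝕜] [IsOrderedAddMonoid 𝕜]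
    {M : Matrix N E 𝕜} {B : Matrix N D 𝕜} {R : Matrix E E 𝕜} {v iL : N → 𝕜} {i_f p : D → 𝕜}
    {iπ : E → 𝕜} {following : Finset D} {f : D → 𝕜 → 𝕜} {lam : 𝕜}
    (kirchhoff : 0 = B *ᵥ i_f - iL - M *ᵥ iπ) (ohm : R *ᵥ iπ = Mᵀ *ᵥ v)
    (hp : ∀ i ∈ following, p i = (Bᵀ *ᵥ v) i * i_f i) (hforming : ∀ i ∉ following, i_f i = 0)
    (hmarg : ∀ i ∈ following, IsSubgradientAt (f i) lam (p i)) :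
    ∑ i ∈ following, p i = v ⬝ᵥ iL + iπ ⬝ᵥ R *ᵥ iπ ∧
      IsMinOn (fun p' => ∑ i ∈ following, f i (p' i))
        {p' | ∑ i ∈ following, p' i = v ⬝ᵥ iL + iπ ⬝ᵥ R *ᵥ iπ} p := by
  have kirchhoff' : B *ᵥ i_f = iL + M *ᵥ iπ :=
    sub_eq_iff_eq_add'.mp (sub_eq_zero.mp kirchhoff.symm)
  have feasible : ∑ i ∈ following, p i = v ⬝ᵥ iL + iπ ⬝ᵥ R *ᵥ iπ :=
    calc
      ∑ i ∈ following, p i = ∑ i ∈ following, (Bᵀ *ᵥ v) i * i_f i := sum_congr rfl hp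
      _ = (Bᵀ *ᵥ v) ⬝ᵥ i_f := sum_subset (subset_univ _) fun i _ hi => by
        rw [hforming i hi, mul_zero]
      _ = v ⬝ᵥ iL + iπ ⬝ᵥ R *ᵥ iπ := by rw [ohm, power_balance_of_kirchhoff kirchhoff']
  exact ⟨feasible, feasible ▸ isMinOn_sum_of_isSubgradientAt hmarg⟩

/-- **Closed-loop equilibria achieve economically optimal dispatch.**
Consider a steady state of the DC microgrid (`If` a selection matrix assigning DGUs
to nodes, DGU `0` grid-forming, `R = diag(r)` with `r > 0` the line resistances):
(i)  `0 = If i_f − iL − M iπ`, (ii) `R iπ = Mᵀ v`,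
(iii) `p i = (Ifᵀ v)_i (i_f)_i` for `i ≠ 0`, (iv) `(Ifᵀ v)_0 = v_ref > 0`.
If moreover `(i_f)_0 = 0` and all grid-following DGUs produce at a common marginal
cost `λ̄` (i.e. `2 q i p i + r i = λ̄`), then `(p i)_{i ≠ 0}` globally minimizes the
total cost `∑_{i ≠ 0} (q i p i² + rc i p i + s i)` among all dispatches summing to
the total load `P_L = vᵀ iL + iπᵀ R iπ`. -/
theorem equilibrium_optimal_dispatch
    (n d e : ℕ) (hd : 0 < d)
    (M : Matrix (Fin n) (Fin e) ℝ)
    (If : Matrix (Fin n) (Fin d) ℝ)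
    (σ : Fin d → Fin n) (hσ : Function.Injective σ)
    (hIf : If = Matrix.of fun i j => if i = σ j then (1 : ℝ) else 0)
    (r : Fin e → ℝ) (hr : ∀ j, 0 < r j)
    (R : Matrix (Fin e) (Fin e) ℝ) (hR : R = Matrix.diagonal r)
    (v : Fin n → ℝ) (i_f : Fin d → ℝ) (iπ : Fin e → ℝ) (iL : Fin n → ℝ)
    (p : Fin d → ℝ) (vref : ℝ)
    (q rc s : Fin d → ℝ) (hq : ∀ i : Fin d, i ≠ ⟨0, hd⟩ → 0 < q i)
    (h1 : (0 : Fin n → ℝ) = If.mulVec i_f - iL - M.mulVec iπ)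
    (h2 : R.mulVec iπ = Mᵀ.mulVec v)
    (h3 : ∀ i : Fin d, i ≠ ⟨0, hd⟩ → p i = (Ifᵀ.mulVec v) i * i_f i)
    (h4 : (Ifᵀ.mulVec v) ⟨0, hd⟩ = vref) (hvref : 0 < vref)
    (hgf : i_f ⟨0, hd⟩ = 0)
    (lam : ℝ) (hmarg : ∀ i : Fin d, i ≠ ⟨0, hd⟩ → 2 * q i * p i + rc i = lam)
    (PL : ℝ) (hPL : PL = v ⬝ᵥ iL + iπ ⬝ᵥ R.mulVec iπ) :
    ∀ p' : Fin d → ℝ, (∑ i ∈ Finset.univ.erase ⟨0, hd⟩, p' i) = PL →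
      (∑ i ∈ Finset.univ.erase ⟨0, hd⟩, (q i * (p i) ^ 2 + rc i * p i + s i)) ≤
        (∑ i ∈ Finset.univ.erase ⟨0, hd⟩, (q i * (p' i) ^ 2 + rc i * p' i + s i)) := by
  have hmarg' : ∀ i ∈ univ.erase ⟨0, hd⟩,
      IsSubgradientAt (fun x => q i * x ^ 2 + rc i * x + s i) lam (p i) := fun i hi =>
    hmarg i (ne_of_mem_erase hi) ▸ isSubgradientAt_quadratic (hq i (ne_of_mem_erase hi)).le _ _ _
  exact hPL ▸ (equilibrium_optimal_dispatch_general h1 h2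
    (fun i hi => h3 i (ne_of_mem_erase hi)) (by simpa using hgf) hmarg').2
end
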